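/- arXiv:2206.08314 — 2 statements merged into one kernel-verified Lean document; each statement's English description precedes it below -/
import Mathlib

section
/- Let z₀ ∈ ℂ, r > 0, Δ = {ζ ∈ ℂ : |ζ − z₀| ≤ r}, and let φ : ℂ → ℂ be an entire function. Then the function g(w) = ∫_Δ conj(φ(ζ))/(ζ − w) dA(ζ) is anti-holomorphic on the open disk {w : |w − z₀| < r}; that is, w ↦ conj(g(w)) is holomorphic there. -/
open Complex MeasureTheory Metric

/-!
Write `Δ` as a union of circles about the centre `c`. On the circle of radius `ρ`, the conjugate of
`z` is a rational function of `z`, so the kernel `1 / conj (z - w)` extends to a rational function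
of `z` that vanishes at `c` and whose only pole is the mirror image `w*` of `w` in that circle.
Hence the mean of `φ(z) / conj (z - w)` vanishes when `w` is inside the circle, and is
`-φ(w*) / conj (w - c)` when `w` is outside. As `ρ` grows from `0` to `|w - c|`, the point
`w* = c + ρ² / conj (w - c)` runs from `c` to `w` with velocity `2 ρ / conj (w - c)`. So if `Φ` is a
primitive of `φ`, integrating `2 π ρ` times these means over `ρ` gives `π (Φ(c) - Φ(w))`, which is
holomorphic in `w`.
-/

open EuclideanGeometry Real Set
open scoped ComplexConjugate Topology

section PolarCoordinates

variable {E : Type*} [NormedAddCommGroup E] [NormedSpace ℝ E] {f : ℂ → E}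

theorem integrableOn_comp_polarCoord_symm_iff :
    IntegrableOn (fun p : ℝ × ℝ ↦ p.1 • f (Complex.polarCoord.symm p)) polarCoord.target ↔
      Integrable f := by
  have hf : Integrable f ↔ IntegrableOn (f ∘ measurableEquivRealProd.symm)
      (polarCoord.symm '' polarCoord.target) := by
    rw [polarCoord.symm_image_target_eq_source,
      integrableOn_congr_set_ae polarCoord_source_ae_eq_univ, integrableOn_univ,
      volume_preserving_equiv_real_prod.symm.integrable_comp_emb
        measurableEquivRealProd.symm.measurableEmbedding]
  rw [hf, integrableOn_image_iff_integrableOn_abs_det_fderiv_smul volume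
    polarCoord.open_target.measurableSet
    (fun p _ ↦ (hasFDerivAt_polarCoord_symm p).hasFDerivWithinAt) polarCoord.symm.injOn]
  refine integrableOn_congr_fun (fun p hp ↦ ?_) polarCoord.open_target.measurableSet
  simp only [det_fderivPolarCoordSymm, abs_of_pos (show 0 < p.1 from hp.1), Function.comp_apply,
    measurableEquivRealProd_symm_polarCoord_symm_apply]

theorem integral_circleMap_Ioo_eq_circleAverage (f : ℂ → E) (c : ℂ) (ρ : ℝ) :
    ∫ θ in Ioo (-π) π, f (circleMap c ρ θ) = (2 * π) • circleAverage f c ρ := by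
  rw [circleAverage_eq_integral_add (-π), smul_inv_smul₀ two_pi_pos.ne',
    intervalIntegral.integral_comp_add_right (fun θ ↦ f (circleMap c ρ θ)),
    intervalIntegral.integral_of_le (by linarith [pi_pos]), integral_Ioc_eq_integral_Ioo]
  congr 3 <;> ring

theorem integral_eq_integral_circleAverage (hf : Integrable f) (c : ℂ) :
    ∫ z, f z = ∫ ρ in Ioi (0 : ℝ), (2 * π * ρ) • circleAverage f c ρ := by
  have hf_shift : Integrable fun z ↦ f (z + c) := hf.comp_add_right c
  calc ∫ z, f z = ∫ z, f (z + c) := (integral_add_right_eq_self f c).symm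
    _ = ∫ p in Ioi (0 : ℝ) ×ˢ Ioo (-π) π, p.1 • f (Complex.polarCoord.symm p + c) :=
      (Complex.integral_comp_polarCoord_symm fun z ↦ f (z + c)).symm
    _ = ∫ ρ in Ioi (0 : ℝ), ∫ θ in Ioo (-π) π, ρ • f (Complex.polarCoord.symm (ρ, θ) + c) :=
      setIntegral_prod _ (integrableOn_comp_polarCoord_symm_iff.2 hf_shift)
    _ = ∫ ρ in Ioi (0 : ℝ), (2 * π * ρ) • circleAverage f c ρ := by
      congr with ρ
      have h_circleMap (θ : ℝ) : Complex.polarCoord.symm (ρ, θ) + c = circleMap c ρ θ := by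
        simp [circleMap, exp_mul_I, add_comm]
      simp only [h_circleMap, integral_smul, integral_circleMap_Ioo_eq_circleAverage, smul_smul,
        mul_comm ρ]

theorem setIntegral_ball_eq_integral_circleAverage {c : ℂ} {r : ℝ}
    (hf : IntegrableOn f (ball c r)) :
    ∫ z in ball c r, f z = ∫ ρ in Ioo 0 r, (2 * π * ρ) • circleAverage f c ρ := by
  rw [← integral_indicator measurableSet_ball,
    integral_eq_integral_circleAverage ((integrable_indicator_iff measurableSet_ball).2 hf) c,
    ← Ioi_inter_Iio, ← setIntegral_indicator measurableSet_Iio]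
  refine setIntegral_congr_fun measurableSet_Ioi fun ρ (hρ : 0 < ρ) ↦ ?_
  have h_dist (θ : ℝ) : dist (circleMap c ρ θ) c = ρ := by
    simp [dist_eq_norm, abs_of_pos hρ]
  by_cases hr : ρ < r <;> simp [circleAverage, indicator, h_dist, hr]

end PolarCoordinates

section Inversion

theorem inversion_mem_ball {V P : Type*} [NormedAddCommGroup V] [InnerProductSpace ℝ V]
    [MetricSpace P] [NormedAddTorsor V P] {c x : P} {R : ℝ} (hR : 0 < R) (h : R < dist x c) :
    inversion c R x ∈ ball c R := by
  rw [mem_ball, dist_inversion_center, div_lt_iff₀ (hR.trans h), sq]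
  gcongr

variable {c w z : ℂ} {R : ℝ}

theorem inversion_eq_add_div_conj : inversion c R w = c + R ^ 2 / conj (w - c) := by
  have h_inv : (conj (w - c))⁻¹ = (w - c) / (dist w c : ℂ) ^ 2 := by
    rw [inv_def, conj_conj, normSq_conj, normSq_eq_norm_sq, dist_eq_norm, div_eq_mul_inv]
    push_cast
    rfl
  rw [div_eq_mul_inv, h_inv, inversion, vsub_eq_sub, vadd_eq_add, real_smul]
  push_cast
  ring

theorem hasDerivAt_inversion_radius :
    HasDerivAt (fun ρ : ℝ ↦ inversion c ρ w) (2 * R * (conj (w - c))⁻¹) R := by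
  simp only [inversion_eq_add_div_conj, div_eq_mul_inv]
  simpa using (((hasDerivAt_pow 2 (R : ℂ)).mul_const (conj (w - c))⁻¹).const_add c).comp_ofReal

theorem sub_mul_conj_sub_of_mem_sphere (hz : z ∈ sphere c R) :
    (z - c) * conj (z - w) = R ^ 2 - conj (w - c) * (z - c) := by
  have h_normSq : (z - c) * conj (z - c) = R ^ 2 := by
    rw [mul_conj', ← dist_eq_norm, mem_sphere.1 hz]
  rw [← h_normSq, map_sub, map_sub, map_sub]
  ring

theorem inv_conj_sub_of_mem_sphere (hR : R ≠ 0) (hz : z ∈ sphere c R) :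
    (conj (z - w))⁻¹ = (z - c) / (R ^ 2 - conj (w - c) * (z - c)) := by
  have hzc : z - c ≠ 0 := sub_ne_zero.2 (ne_of_mem_sphere hz hR)
  rw [← sub_mul_conj_sub_of_mem_sphere hz, div_mul_cancel_left₀ hzc]

theorem inv_conj_sub_eq_div_sub_inversion (hR : R ≠ 0) (hw : w ≠ c) (hz : z ∈ sphere c R) :
    (conj (z - w))⁻¹ = -(conj (w - c))⁻¹ * ((z - c) / (z - inversion c R w)) := by
  have hwc : conj (w - c) ≠ 0 := (map_ne_zero _).2 (sub_ne_zero.2 hw)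
  have h_denom : R ^ 2 - conj (w - c) * (z - c) = -conj (w - c) * (z - inversion c R w) := by
    rw [inversion_eq_add_div_conj]
    field_simp
    ring
  rw [inv_conj_sub_of_mem_sphere hR hz, h_denom, neg_mul, div_neg, neg_mul, div_mul_eq_div_div_swap,
    div_eq_inv_mul]

end Inversion

section CauchyKernel

variable {E : Type*} [NormedAddCommGroup E] [NormedSpace ℂ E] {φ Φ : ℂ → E} {c w : ℂ} {r R : ℝ}

theorem locallyIntegrable_inv_conj_sub (w : ℂ) :
    LocallyIntegrable fun z : ℂ ↦ (conj (z - w))⁻¹ := by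
  have h_zero : LocallyIntegrable fun z : ℂ ↦ (conj z)⁻¹ :=
    locallyIntegrable_of_norm_le_rpow (C := 1) (α := 1) (by simp) (by simp)
      (ae_of_all _ fun z ↦ by simp [rpow_neg_one])
      continuous_conj.measurable.inv.aestronglyMeasurable
  rw [← map_sub_right_eq_self volume w] at h_zero
  exact (locallyIntegrable_map_homeomorph (Homeomorph.subRight w)).1 h_zero

theorem integrableOn_inv_conj_sub_smul {s : Set ℂ} (hφ : IntegrableOn φ s)
    (hφ_bounded : φ =O[𝓝 w] (1 : ℂ → ℝ)) :
    IntegrableOn (fun z ↦ (conj (z - w))⁻¹ • φ z) s := by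
  obtain ⟨C, hC⟩ := hφ_bounded.bound
  obtain ⟨ε, hε, h_bound⟩ := Metric.eventually_nhds_iff_ball.1 hC
  have h_near : IntegrableOn (fun z ↦ (conj (z - w))⁻¹ • φ z) (ball w ε) (volume.restrict s) := by
    have h_kernel : IntegrableOn (fun z ↦ (conj (z - w))⁻¹) (ball w ε) (volume.restrict s) :=
      (((locallyIntegrable_inv_conj_sub w).integrableOn_isCompact
        (isCompact_closedBall w ε)).mono_set ball_subset_closedBall).mono_measure
          Measure.restrict_le_self
    refine h_kernel.smul_bdd C hφ.aestronglyMeasurable.restrict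
      (ae_restrict_of_forall_mem measurableSet_ball fun z hz ↦ ?_)
    simpa using h_bound z hz
  have h_far : IntegrableOn (fun z ↦ (conj (z - w))⁻¹ • φ z) (ball w ε)ᶜ (volume.restrict s) := by
    refine hφ.integrableOn.bdd_smul ε⁻¹
      (locallyIntegrable_inv_conj_sub w).aestronglyMeasurable.restrict.restrict
      (ae_restrict_of_forall_mem measurableSet_ball.compl fun z hz ↦ ?_)
    rw [norm_inv, RCLike.norm_conj, ← dist_eq_norm]
    exact inv_anti₀ hε (not_lt.1 hz)
  rw [IntegrableOn, ← integrableOn_univ, ← union_compl_self (ball w ε)]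
  exact h_near.union h_far

variable [CompleteSpace E]

theorem circleAverage_inv_conj_sub_smul_of_lt (hφ : DiffContOnCl ℂ φ (ball c R))
    (h : dist w c < R) :
    circleAverage (fun z ↦ (conj (z - w))⁻¹ • φ z) c R = 0 := by
  have hR : 0 < R := dist_nonneg.trans_lt h
  have h_ne : ∀ z ∈ closure (ball c R), R ^ 2 - conj (w - c) * (z - c) ≠ 0 := by
    intro z hz h_eq
    have h_norm : R ^ 2 = dist w c * dist z c := by
      simpa [-map_sub, dist_eq_norm] using congrArg norm (sub_eq_zero.1 h_eq)
    have hzR : dist z c ≤ R := mem_closedBall.1 (closure_ball_subset_closedBall hz)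
    nlinarith [dist_nonneg (x := z) (y := c), dist_nonneg (x := w) (y := c)]
  have h_diff : DiffContOnCl ℂ
      (fun z ↦ ((z - c) / (R ^ 2 - conj (w - c) * (z - c))) • φ z) (ball c |R|) := by
    rw [abs_of_pos hR]
    refine DiffContOnCl.smul ?_ hφ
    exact DifferentiableOn.diffContOnCl (.div (by fun_prop) (by fun_prop) h_ne)
  calc circleAverage (fun z ↦ (conj (z - w))⁻¹ • φ z) c R
      = circleAverage (fun z ↦ ((z - c) / (R ^ 2 - conj (w - c) * (z - c))) • φ z) c R :=
        circleAverage_congr_sphere fun z hz ↦ by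
          simp only [inv_conj_sub_of_mem_sphere hR.ne' (abs_of_pos hR ▸ hz)]
    _ = 0 := by rw [h_diff.circleAverage, sub_self, zero_div, zero_smul]

theorem circleAverage_inv_conj_sub_smul_of_gt (hφ : DiffContOnCl ℂ φ (ball c R)) (hR : 0 < R)
    (h : R < dist w c) :
    circleAverage (fun z ↦ (conj (z - w))⁻¹ • φ z) c R =
      -(conj (w - c))⁻¹ • φ (inversion c R w) := by
  have hw : w ≠ c := dist_pos.1 (hR.trans h)
  rw [← abs_of_pos hR] at hφ
  calc circleAverage (fun z ↦ (conj (z - w))⁻¹ • φ z) c R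
      = circleAverage (fun z ↦ -(conj (w - c))⁻¹ •
          ((z - c) / (z - inversion c R w)) • φ z) c R :=
        circleAverage_congr_sphere fun z hz ↦ by
          simp only [inv_conj_sub_eq_div_sub_inversion hR.ne' hw (abs_of_pos hR ▸ hz), smul_smul]
    _ = -(conj (w - c))⁻¹ • φ (inversion c R w) := by
        rw [circleAverage_fun_smul, hφ.circleAverage_smul_div]
        rw [abs_of_pos hR]
        exact inversion_mem_ball hR h

theorem integral_inversion_radius_smul (hΦ : ∀ z ∈ ball c r, HasDerivAt Φ (φ z) z)
    (hw : w ∈ ball c r) :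
    ∫ ρ in (0 : ℝ)..dist w c, (2 * ρ * (conj (w - c))⁻¹) • φ (inversion c ρ w) = Φ w - Φ c := by
  have hφ : DifferentiableOn ℂ φ (ball c r) := IsExactOn.differentiableOn isOpen_ball ⟨Φ, hΦ⟩
  have h_mem : ∀ ρ ∈ uIcc 0 (dist w c), inversion c ρ w ∈ ball c r := by
    intro ρ hρ
    rw [uIcc_of_le dist_nonneg] at hρ
    rw [mem_ball, dist_inversion_center]
    refine lt_of_le_of_lt (div_le_of_le_mul₀ dist_nonneg dist_nonneg ?_) (mem_ball.1 hw)
    nlinarith [hρ.1, hρ.2]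
  have h_cont : Continuous fun ρ : ℝ ↦ inversion c ρ w :=
    continuous_iff_continuousAt.2 fun _ ↦ hasDerivAt_inversion_radius.continuousAt
  rw [intervalIntegral.integral_eq_sub_of_hasDerivAt
    (fun ρ hρ ↦ (hΦ _ (h_mem ρ hρ)).scomp ρ hasDerivAt_inversion_radius)]
  · simp
  · exact (ContinuousOn.smul (by fun_prop)
      (hφ.continuousOn.comp h_cont.continuousOn h_mem)).intervalIntegrable

theorem setIntegral_ball_inv_conj_sub_smul (hφ : IntegrableOn φ (ball c r))
    (hΦ : ∀ z ∈ ball c r, HasDerivAt Φ (φ z) z) (hw : w ∈ ball c r) :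
    ∫ z in ball c r, (conj (z - w))⁻¹ • φ z = π • (Φ c - Φ w) := by
  have hφ_diff : DifferentiableOn ℂ φ (ball c r) := IsExactOn.differentiableOn isOpen_ball ⟨Φ, hΦ⟩
  have hφ_bounded : φ =O[𝓝 w] (1 : ℂ → ℝ) :=
    (hφ_diff.differentiableAt (isOpen_ball.mem_nhds hw)).continuousAt.isBigO_one ℝ
  have hφ_circle {ρ : ℝ} (hρ : ρ < r) : DiffContOnCl ℂ φ (ball c ρ) :=
    hφ_diff.diffContOnCl_ball (closedBall_subset_ball hρ)
  have h_outer : ∀ ρ ∈ Ioo 0 r \ Ioc 0 (dist w c),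
      (2 * π * ρ) • circleAverage (fun z ↦ (conj (z - w))⁻¹ • φ z) c ρ = 0 := by
    intro ρ hρ
    have hwρ : dist w c < ρ := not_le.1 fun h ↦ hρ.2 ⟨hρ.1.1, h⟩
    rw [circleAverage_inv_conj_sub_smul_of_lt (hφ_circle hρ.1.2) hwρ, smul_zero]
  have h_inner : ∀ ρ ∈ Ioo 0 (dist w c),
      (2 * π * ρ) • circleAverage (fun z ↦ (conj (z - w))⁻¹ • φ z) c ρ =
        (-π) • (2 * ρ * (conj (w - c))⁻¹) • φ (inversion c ρ w) := by
    intro ρ hρ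
    rw [circleAverage_inv_conj_sub_smul_of_gt (hφ_circle (hρ.2.trans hw)) hρ.1 hρ.2]
    simp only [← Complex.coe_smul, smul_smul]
    congr 1
    push_cast
    ring
  calc ∫ z in ball c r, (conj (z - w))⁻¹ • φ z
      = ∫ ρ in Ioo 0 r, (2 * π * ρ) • circleAverage (fun z ↦ (conj (z - w))⁻¹ • φ z) c ρ :=
        setIntegral_ball_eq_integral_circleAverage (integrableOn_inv_conj_sub_smul hφ hφ_bounded)
    _ = ∫ ρ in Ioo 0 (dist w c),
          (2 * π * ρ) • circleAverage (fun z ↦ (conj (z - w))⁻¹ • φ z) c ρ := by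
        rw [setIntegral_eq_of_subset_of_forall_sdiff_eq_zero measurableSet_Ioo
          (Ioc_subset_Ioo_right hw) h_outer, integral_Ioc_eq_integral_Ioo]
    _ = ∫ ρ in Ioo 0 (dist w c), (-π) • (2 * ρ * (conj (w - c))⁻¹) • φ (inversion c ρ w) :=
        setIntegral_congr_fun measurableSet_Ioo h_inner
    _ = (-π) • (Φ w - Φ c) := by
        rw [integral_smul, ← integral_Ioc_eq_integral_Ioo,
          ← intervalIntegral.integral_of_le dist_nonneg, integral_inversion_radius_smul hΦ hw]
    _ = π • (Φ c - Φ w) := by rw [neg_smul, ← smul_neg, neg_sub]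

end CauchyKernel

theorem antiholomorphic_integral_general {z₀ : ℂ} {r : ℝ} {φ : ℂ → ℂ}
    (hφ : DifferentiableOn ℂ φ (ball z₀ r)) (hφ_int : IntegrableOn φ (ball z₀ r)) :
    DifferentiableOn ℂ
      (fun w => conj (∫ ζ in closedBall z₀ r, conj (φ ζ) / (ζ - w))) (ball z₀ r) := by
  obtain ⟨Φ, hΦ⟩ := hφ.isExactOn_ball
  have hΦ_diff : DifferentiableOn ℂ Φ (ball z₀ r) := fun z hz ↦
    (hΦ z hz).differentiableAt.differentiableWithinAt
  refine (show DifferentiableOn ℂ (fun w ↦ π • (Φ z₀ - Φ w)) _ from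
    (hΦ_diff.const_sub (Φ z₀)).const_smul π).congr fun w hw ↦ ?_
  calc conj (∫ ζ in closedBall z₀ r, conj (φ ζ) / (ζ - w))
      = ∫ ζ in closedBall z₀ r, (conj (ζ - w))⁻¹ • φ ζ := by
        rw [← integral_conj]
        simp only [map_div₀, conj_conj, smul_eq_mul, inv_mul_eq_div]
    _ = ∫ ζ in ball z₀ r, (conj (ζ - w))⁻¹ • φ ζ := by
        rw [← ball_union_sphere, setIntegral_congr_set (union_ae_eq_left_of_ae_eq_empty
          (ae_eq_empty.2 (Measure.addHaar_sphere volume z₀ r)))]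
    _ = π • (Φ z₀ - Φ w) := setIntegral_ball_inv_conj_sub_smul hφ_int hΦ hw

/-- for an entire function `φ`, the function
`w ↦ ∫_Δ conj(φ(ζ))/(ζ − w) dA(ζ)` is anti-holomorphic on the open disk. -/
theorem antiholomorphic_integral (z₀ : ℂ) (r : ℝ) (hr : 0 < r)
    (φ : ℂ → ℂ) (hφ : Differentiable ℂ φ) :
    DifferentiableOn ℂ
      (fun w => (starRingEnd ℂ)
        (∫ ζ in closedBall z₀ r, (starRingEnd ℂ) (φ ζ) / (ζ - w)))
      (ball z₀ r) :=
  antiholomorphic_integral_general hφ.differentiableOn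
    ((hφ.continuous.locallyIntegrable.integrableOn_isCompact (isCompact_closedBall z₀ r)).mono_set
      ball_subset_closedBall)
end

section
/- Let l ≥ 1 be an integer, let Δ ⊆ ℂ be a closed disk, and let z be an interior point of Δ. Then ∫_Δ (conj(ζ) − conj(z))^l / (ζ − z)^{l+1} dA(ζ) = 0. -/
open Complex MeasureTheory Metric

/-!
In polar coordinates about `z`, a kernel that is homogeneous of degree `-1` cancels the Jacobian, so
its integral over the disk is the integral over all directions `e` of its value at `e` times the
length of the chord issuing from `z` in the direction `e`. With `w = z - c` this length is
`√(⟪w, e⟫² + r² - ‖w‖²) - ⟪w, e⟫`. The square root is even in `e`, so an odd kernel only sees the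
linear term `⟪w, e⟫`, which contains the frequencies `±1` only. On the unit circle the kernel of the
theorem is `e ^ (-(2 * l + 1))`, which is orthogonal to both.
-/

open scoped ComplexConjugate RealInnerProductSpace

section ChordLength

variable {E : Type*} [NormedAddCommGroup E] [InnerProductSpace ℝ E]

/-- The length of the segment that the ray `{w + ρ • e | 0 ≤ ρ}`, with `‖e‖ = 1`, cuts out of the
closed ball of radius `r` about the origin, when its starting point `w` lies in that ball. -/
noncomputable def chordLength (r : ℝ) (w e : E) : ℝ :=
  √(⟪w, e⟫ ^ 2 + (r ^ 2 - ‖w‖ ^ 2)) - ⟪w, e⟫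

variable {r : ℝ} {w e : E}

theorem continuous_chordLength : Continuous (chordLength r w) := by
  unfold chordLength; fun_prop

theorem chordLength_nonneg (hw : ‖w‖ ≤ r) : 0 ≤ chordLength r w e := by
  have hsq : ‖w‖ ^ 2 ≤ r ^ 2 := by gcongr
  exact sub_nonneg.2 (Real.le_sqrt_of_sq_le (by linarith))

theorem norm_add_smul_le_iff_le_chordLength (hw : ‖w‖ ≤ r) (he : ‖e‖ = 1) {ρ : ℝ} (hρ : 0 ≤ ρ) :
    ‖w + ρ • e‖ ≤ r ↔ ρ ≤ chordLength r w e := by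
  have hsq : ‖w‖ ^ 2 ≤ r ^ 2 := by gcongr
  have hdisc : 0 ≤ ⟪w, e⟫ ^ 2 + (r ^ 2 - ‖w‖ ^ 2) := by nlinarith [sq_nonneg ⟪w, e⟫]
  have hlower : -√(⟪w, e⟫ ^ 2 + (r ^ 2 - ‖w‖ ^ 2)) ≤ ρ + ⟪w, e⟫ := by
    have := Real.abs_le_sqrt (show ⟪w, e⟫ ^ 2 ≤ ⟪w, e⟫ ^ 2 + (r ^ 2 - ‖w‖ ^ 2) by linarith)
    linarith [neg_le_of_abs_le this]
  have hexpand : ‖w + ρ • e‖ ^ 2 = (ρ + ⟪w, e⟫) ^ 2 - ⟪w, e⟫ ^ 2 + ‖w‖ ^ 2 := by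
    rw [norm_add_sq_real, norm_smul, he, mul_one, Real.norm_eq_abs, sq_abs, inner_smul_right]
    ring
  calc ‖w + ρ • e‖ ≤ r
      ↔ ‖w + ρ • e‖ ^ 2 ≤ r ^ 2 :=
        (sq_le_sq₀ (norm_nonneg _) ((norm_nonneg w).trans hw)).symm
    _ ↔ (ρ + ⟪w, e⟫) ^ 2 ≤ ⟪w, e⟫ ^ 2 + (r ^ 2 - ‖w‖ ^ 2) := by
        rw [hexpand]; constructor <;> intro h <;> linarith
    _ ↔ ρ + ⟪w, e⟫ ≤ √(⟪w, e⟫ ^ 2 + (r ^ 2 - ‖w‖ ^ 2)) := by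
        rw [Real.sq_le hdisc, and_iff_right hlower]
    _ ↔ ρ ≤ chordLength r w e := le_sub_iff_add_le.symm

end ChordLength

section Integrals

variable {E : Type*} [NormedAddCommGroup E] [NormedSpace ℝ E]

theorem intervalIntegral_eq_zero_of_antiperiodic {f : ℝ → E} {T : ℝ}
    (hf : Function.Antiperiodic f T) (a : ℝ) : ∫ x in a..a + 2 * T, f x = 0 := by
  have : IsAddTorsionFree E := .of_isTorsionFree ℝ E
  refine self_eq_neg.1 ?_
  calc ∫ x in a..a + 2 * T, f x
      = ∫ x in a + T..a + T + 2 * T, f x := hf.periodic_two_mul.intervalIntegral_add_eq _ _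
    _ = ∫ x in a..a + 2 * T, f (x + T) := by
        rw [intervalIntegral.integral_comp_add_right, add_right_comm]
    _ = -∫ x in a..a + 2 * T, f x := by
        simp only [hf _, intervalIntegral.integral_neg]

theorem continuous_comp_exp_mul_I {X : Type*} [TopologicalSpace X] {K : ℂ → X}
    (hK : ContinuousOn K {0}ᶜ) : Continuous fun θ : ℝ ↦ K (exp (θ * I)) :=
  hK.comp_continuous (by fun_prop) fun _ ↦ exp_ne_zero _

variable [CompleteSpace E]

theorem setIntegral_subgraph_comp_snd {R : ℝ → ℝ} {h : ℝ → E} {a b : ℝ} (hab : a ≤ b)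
    (hR : Continuous R) (hR₀ : ∀ θ, 0 ≤ R θ) (hh : Continuous h) :
    ∫ p in Set.Ioi (0 : ℝ) ×ˢ Set.Ioo a b, {p : ℝ × ℝ | p.1 ≤ R p.2}.indicator (fun p ↦ h p.2) p =
      ∫ θ in a..b, R θ • h θ := by
  have hmeas : MeasurableSet {p : ℝ × ℝ | p.1 ≤ R p.2} :=
    measurableSet_le measurable_fst (hR.measurable.comp measurable_snd)
  have hint : Integrable ({p : ℝ × ℝ | p.1 ≤ R p.2}.indicator fun p ↦ h p.2)
      ((volume.restrict (Set.Ioi 0)).prod (volume.restrict (Set.Ioo a b))) := by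
    obtain ⟨M, hM⟩ := isCompact_Icc.bddAbove_image (hR.continuousOn (s := Set.Icc a b))
    rw [Measure.prod_restrict, integrable_indicator_iff hmeas, IntegrableOn,
      Measure.restrict_restrict hmeas]
    refine ((hh.comp continuous_snd).continuousOn.integrableOn_compact
      (isCompact_Icc (a := ((0, a) : ℝ × ℝ)) (b := (M, b)))).mono_set ?_
    rintro ⟨ρ, θ⟩ ⟨hρR, hρ, hθ⟩
    have hθ' := Set.Ioo_subset_Icc_self hθ
    exact ⟨⟨le_of_lt hρ, hθ'.1⟩, le_trans hρR (hM ⟨θ, hθ', rfl⟩), hθ'.2⟩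
  have hfiber (θ : ℝ) : ∫ ρ in Set.Ioi 0,
      {p : ℝ × ℝ | p.1 ≤ R p.2}.indicator (fun p ↦ h p.2) (ρ, θ) = R θ • h θ := by
    calc _ = ∫ ρ in Set.Ioi 0, (Set.Iic (R θ)).indicator (fun _ ↦ h θ) ρ := rfl
      _ = ∫ _ in Set.Ioc 0 (R θ), h θ := setIntegral_indicator measurableSet_Iic
      _ = R θ • h θ := by simp [hR₀ θ]
  rw [Measure.volume_eq_prod, ← Measure.prod_restrict, integral_prod_symm _ hint,
    intervalIntegral.integral_of_le hab, integral_Ioc_eq_integral_Ioo]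
  simp only [hfiber]

variable {K : ℂ → E}

theorem setIntegral_eq_intervalIntegral_radius_smul_of_homogeneous {S : Set ℂ} {R : ℝ → ℝ}
    (hS : MeasurableSet S) (hR : Continuous R) (hR₀ : ∀ θ, 0 ≤ R θ)
    (hSR : ∀ ρ : ℝ, 0 < ρ → ∀ θ : ℝ, ρ • exp (θ * I) ∈ S ↔ ρ ≤ R θ)
    (hK : ContinuousOn K {0}ᶜ) (hom : ∀ ρ : ℝ, 0 < ρ → ∀ x, K (ρ • x) = ρ⁻¹ • K x) :
    ∫ x in S, K x = ∫ θ in -Real.pi..Real.pi, R θ • K (exp (θ * I)) := by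
  rw [← integral_indicator hS, ← Complex.integral_comp_polarCoord_symm, polarCoord_target,
    ← setIntegral_subgraph_comp_snd (by linarith [Real.pi_pos]) hR hR₀
      (continuous_comp_exp_mul_I hK)]
  refine setIntegral_congr_fun (measurableSet_Ioi.prod measurableSet_Ioo) ?_
  rintro ⟨ρ, θ⟩ ⟨hρ : 0 < ρ, -⟩
  have hpolar : Complex.polarCoord.symm (ρ, θ) = ρ • exp (θ * I) := by
    rw [Complex.polarCoord_symm_apply, real_smul, exp_mul_I, ofReal_cos, ofReal_sin]
  simp only [hpolar, Set.indicator, hSR ρ hρ, Set.mem_ofPred_eq, hom ρ hρ, smul_ite,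
    smul_inv_smul₀ hρ.ne', smul_zero]

theorem setIntegral_closedBall_sub_eq_neg_intervalIntegral_inner_smul {c z : ℂ} {r : ℝ}
    (hz : z ∈ closedBall c r) (hK : ContinuousOn K {0}ᶜ)
    (hom : ∀ t : ℝ, t ≠ 0 → ∀ x, K (t • x) = t⁻¹ • K x) :
    ∫ ζ in closedBall c r, K (ζ - z) =
      -∫ θ in -Real.pi..Real.pi, ⟪z - c, exp (θ * I)⟫ • K (exp (θ * I)) := by
  set w := z - c with hw_def
  have hw : ‖w‖ ≤ r := mem_closedBall_iff_norm.1 hz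
  have hcont := continuous_comp_exp_mul_I hK
  have hantipode (θ : ℝ) : exp (↑(θ + Real.pi) * I) = -exp (θ * I) := by
    rw [ofReal_add, add_mul, exp_add, exp_pi_mul_I, mul_neg_one]
  have hodd (x : ℂ) : K (-x) = -K x := by simpa using hom (-1) (by norm_num) x
  have hsqrt : ∫ θ in -Real.pi..Real.pi,
      √(⟪w, exp (θ * I)⟫ ^ 2 + (r ^ 2 - ‖w‖ ^ 2)) • K (exp (θ * I)) = 0 := by
    convert intervalIntegral_eq_zero_of_antiperiodic (T := Real.pi) _ (-Real.pi) using 2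
    · ring
    · intro θ
      simp only [hantipode, inner_neg_right, neg_sq, hodd, smul_neg]
  calc ∫ ζ in closedBall c r, K (ζ - z)
      = ∫ x in closedBall (-w) r, K x := by
        rw [← (measurePreserving_sub_right volume z).setIntegral_preimage_emb
          (MeasurableEquiv.subRight z).measurableEmbedding K]
        congr! 2
        ext ζ
        simp [hw_def, dist_eq_norm]
    _ = ∫ θ in -Real.pi..Real.pi, chordLength r w (exp (θ * I)) • K (exp (θ * I)) := by
        refine setIntegral_eq_intervalIntegral_radius_smul_of_homogeneous measurableSet_closedBall
          (continuous_chordLength.comp (by fun_prop)) (fun _ ↦ chordLength_nonneg hw)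
          (fun ρ hρ θ ↦ ?_) hK fun ρ hρ ↦ hom ρ hρ.ne'
        rw [mem_closedBall_iff_norm, sub_neg_eq_add, add_comm,
          norm_add_smul_le_iff_le_chordLength hw (norm_exp_ofReal_mul_I θ) hρ.le]
    _ = -∫ θ in -Real.pi..Real.pi, ⟪w, exp (θ * I)⟫ • K (exp (θ * I)) := by
        simp only [chordLength, sub_smul]
        rw [intervalIntegral.integral_sub, hsqrt, zero_sub] <;>
          exact (Continuous.smul (by fun_prop) hcont).intervalIntegrable _ _

end Integrals

theorem intervalIntegral_exp_mul_I_zpow {n : ℤ} (hn : n ≠ 0) :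
    ∫ θ in -Real.pi..Real.pi, exp (θ * I) ^ n = 0 := by
  have hc : (n * I : ℂ) ≠ 0 := mul_ne_zero (Int.cast_ne_zero.2 hn) I_ne_zero
  have hexp (θ : ℝ) : exp (θ * I) ^ n = exp (n * I * θ) := by
    rw [← exp_int_mul]; ring_nf
  have hends : exp (n * I * Real.pi) = exp (n * I * (-Real.pi : ℝ)) :=
    exp_eq_exp_iff_exists_int.2 ⟨n, by push_cast; ring⟩
  simp only [hexp]
  rw [integral_exp_mul_complex hc, hends, sub_self, zero_div]

theorem intervalIntegral_inner_smul_exp_mul_I_zpow (w : ℂ) {n : ℤ} (hn : n ≠ 1) (hn' : n ≠ -1) :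
    ∫ θ in -Real.pi..Real.pi, ⟪w, exp (θ * I)⟫ • exp (θ * I) ^ n = 0 := by
  have hcont (m : ℤ) : Continuous fun θ : ℝ ↦ exp (θ * I) ^ m :=
    Continuous.zpow₀ (by fun_prop) m fun θ ↦ .inl (exp_ne_zero _)
  have hsplit (θ : ℝ) : ⟪w, exp (θ * I)⟫ • exp (θ * I) ^ n =
      conj w / 2 * exp (θ * I) ^ (n + 1) + w / 2 * exp (θ * I) ^ (n - 1) := by
    have hx := exp_ne_zero (θ * I)
    rw [Complex.inner, real_smul, re_eq_add_conj, map_mul, conj_conj,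
      ← inv_eq_conj (norm_exp_ofReal_mul_I θ), zpow_add_one₀ hx, zpow_sub_one₀ hx]
    ring
  simp only [hsplit]
  rw [intervalIntegral.integral_add, intervalIntegral.integral_const_mul,
    intervalIntegral.integral_const_mul, intervalIntegral_exp_mul_I_zpow (by lia),
    intervalIntegral_exp_mul_I_zpow (by lia), mul_zero, mul_zero, add_zero]
  all_goals exact ((hcont _).const_mul _).intervalIntegrable _ _

theorem integral_conj_power_singular_general {c z : ℂ} {r : ℝ} (hz : z ∈ closedBall c r) {l : ℤ}
    (hl₀ : l ≠ 0) (hl₁ : l ≠ -1) :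
    ∫ ζ in closedBall c r, (conj ζ - conj z) ^ l / (ζ - z) ^ (l + 1) = 0 := by
  let K (x : ℂ) : ℂ := conj x ^ l / x ^ (l + 1)
  have hK : ContinuousOn K {0}ᶜ := by
    have hne : ∀ x ∈ ({0}ᶜ : Set ℂ), x ≠ 0 := fun _ hx ↦ hx
    exact (continuous_conj.continuousOn.zpow₀ l fun x hx ↦ .inl ((map_ne_zero _).2 (hne x hx))).div
      (continuousOn_id.zpow₀ _ fun x hx ↦ .inl (hne x hx)) fun x hx ↦ zpow_ne_zero _ (hne x hx)
  have hom (t : ℝ) (ht : t ≠ 0) (x : ℂ) : K (t • x) = t⁻¹ • K x := by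
    have ht' : (t : ℂ) ≠ 0 := ofReal_ne_zero.2 ht
    simp only [K, real_smul, map_mul, conj_ofReal, mul_zpow, zpow_add_one₀ ht', ofReal_inv]
    field_simp
  have hcircle (θ : ℝ) : K (exp (θ * I)) = exp (θ * I) ^ (-(2 * l + 1)) := by
    simp only [K, ← inv_eq_conj (norm_exp_ofReal_mul_I θ), inv_zpow', ← zpow_sub₀ (exp_ne_zero _)]
    ring_nf
  calc ∫ ζ in closedBall c r, (conj ζ - conj z) ^ l / (ζ - z) ^ (l + 1)
      = ∫ ζ in closedBall c r, K (ζ - z) := by simp only [K, map_sub]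
    _ = -∫ θ in -Real.pi..Real.pi, ⟪z - c, exp (θ * I)⟫ • K (exp (θ * I)) :=
        setIntegral_closedBall_sub_eq_neg_intervalIntegral_inner_smul hz hK hom
    _ = 0 := by
        simp only [hcircle]
        rw [intervalIntegral_inner_smul_exp_mul_I_zpow _ (by lia) (by lia), neg_zero]

/-- `∫_Δ (conj ζ − conj z)^l/(ζ − z)^{l+1} dA(ζ) = 0` for `l ≥ 1`
and `z` an interior point of the closed disk `Δ`. -/
theorem integral_conj_power_singular (c : ℂ) (r : ℝ) (hr : 0 < r) (l : ℕ) (hl : 1 ≤ l)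
    (z : ℂ) (hz : z ∈ ball c r) :
    ∫ ζ in closedBall c r, ((starRingEnd ℂ) ζ - (starRingEnd ℂ) z) ^ l / (ζ - z) ^ (l + 1) = 0 := by
  exact_mod_cast integral_conj_power_singular_general (ball_subset_closedBall hz) (l := l)
    (by lia) (by lia)
end
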